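/- Let p be a prime and i, k natural numbers with 0 < i, 0 < k, p ∤ i and p ∤ k. Suppose b ∈ 𝔽_p((t)) and ε ∈ 𝔽_p((t)) is (the image of) a formal power series with zero constant coefficient (i.e. ε = 0 or v_t(ε) > 0), and suppose that t^{−i} − t^{−k} = b^p − b + ε holds in 𝔽_p((t)). Then i = k. -/

import Mathlib

/-!
If a series `b` over a domain has order `γ < 0` and `1 < n`, then `n • γ < γ`, so `b ^ n - b` has
the nonzero coefficient `b.leadingCoeff ^ n` at the exponent `n • γ`. Hence, as soon as the polar
part of `b ^ n - b` avoids the multiples of `n`, the series `b` has no polar part, and neither does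
`b ^ n - b`. For `n = p` in characteristic `p`, this says that a polar part supported on exponents
prime to `p` is determined by its Artin–Schreier class.
-/

open HahnSeries

section HahnSeries

variable {Γ R : Type*} [AddCommMonoid Γ] [LinearOrder Γ] [IsOrderedCancelAddMonoid Γ]

theorem nsmul_lt_self_of_neg {γ : Γ} {n : ℕ} (hγ : γ < 0) (hn : 1 < n) : n • γ < γ := by
  obtain ⟨m, rfl⟩ := Nat.exists_eq_add_of_le' hn
  rw [succ_nsmul]
  exact add_lt_of_neg_left γ (nsmul_neg hγ m.succ_ne_zero)

theorem coeff_pow_nsmul_order [Semiring R] [NoZeroDivisors R] (b : HahnSeries Γ R) (n : ℕ) :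
    (b ^ n).coeff (n • b.order) = b.leadingCoeff ^ n := by
  induction n with
  | zero => simp
  | succ n ih =>
    rw [pow_succ, succ_nsmul, ← order_pow, coeff_mul_order_add_order, leadingCoeff_eq, order_pow,
      ih, pow_succ]

variable [Ring R] {b e f : HahnSeries Γ R} {n : ℕ}

theorem orderTop_pow_sub_self_nonneg (hb : 0 ≤ b.orderTop) : 0 ≤ (b ^ n - b).orderTop :=
  (le_min ((nsmul_nonneg hb n).trans orderTop_nsmul_le_orderTop_pow) hb).trans
    min_orderTop_le_orderTop_sub

variable [NoZeroDivisors R]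

theorem coeff_pow_sub_self_nsmul_order (hn : 1 < n) (hb : b.order < 0) :
    (b ^ n - b).coeff (n • b.order) = b.leadingCoeff ^ n := by
  rw [coeff_sub, coeff_pow_nsmul_order,
    coeff_eq_zero_of_lt_order (nsmul_lt_self_of_neg hb hn), sub_zero]

theorem orderTop_nonneg_of_coeff_pow_sub_self_eq_zero (hn : 1 < n)
    (h : ∀ γ < 0, (b ^ n - b).coeff (n • γ) = 0) : 0 ≤ b.orderTop := by
  rw [zero_le_orderTop_iff]
  by_contra! hb
  have hlead : b.leadingCoeff ^ n = 0 := coeff_pow_sub_self_nsmul_order hn hb ▸ h b.order hb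
  have hb0 : b = 0 := leadingCoeff_eq_zero.1 (eq_zero_of_pow_eq_zero hlead)
  exact hb.ne (hb0 ▸ order_zero)

theorem orderTop_nonneg_of_eq_pow_sub_self_add (hn : 1 < n) (he : 0 ≤ e.orderTop)
    (hf : ∀ γ < 0, f.coeff (n • γ) = 0) (h : f = b ^ n - b + e) : 0 ≤ f.orderTop := by
  have hb : 0 ≤ b.orderTop := by
    refine orderTop_nonneg_of_coeff_pow_sub_self_eq_zero hn fun γ hγ ↦ ?_
    have hnγ : n • γ < 0 := (nsmul_lt_self_of_neg hγ hn).trans hγ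
    rw [eq_sub_of_add_eq h.symm, coeff_sub, hf γ hγ,
      coeff_eq_zero_of_lt_orderTop ((WithTop.coe_lt_zero.2 hnγ).trans_le he), sub_zero]
  exact h ▸ (le_min (orderTop_pow_sub_self_nonneg hb) he).trans min_orderTop_le_orderTop_add

theorem stmt6_general [Nontrivial R] {α β : Γ} (hn : 1 < n) (hα : α < 0)
    (hnα : ∀ γ, n • γ ≠ α) (hnβ : ∀ γ, n • γ ≠ β) (he : 0 ≤ e.orderTop)
    (h : single α 1 - single β 1 = b ^ n - b + e) : α = β := by
  have hnonneg : 0 ≤ (single α 1 - single β 1 : HahnSeries Γ R).orderTop := by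
    refine orderTop_nonneg_of_eq_pow_sub_self_add hn he (fun γ _ ↦ ?_) h
    rw [coeff_sub, coeff_single_of_ne (hnα γ), coeff_single_of_ne (hnβ γ), sub_zero]
  by_contra hne
  have hcoeff := coeff_eq_zero_of_lt_orderTop ((WithTop.coe_lt_zero.2 hα).trans_le hnonneg)
  rw [coeff_sub, coeff_single_same, coeff_single_of_ne hne, sub_zero] at hcoeff
  exact one_ne_zero hcoeff

end HahnSeries

theorem orderTop_coe_powerSeries_nonneg {R : Type*} [Semiring R] (e : PowerSeries R) :
    0 ≤ (e : LaurentSeries R).orderTop :=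
  le_orderTop_iff_forall.2 fun m hm ↦ by
    rw [PowerSeries.coeff_coe, if_pos (WithTop.coe_lt_zero.1 hm)]

theorem coe_powerSeries_X_zpow {K : Type*} [Field K] (m : ℤ) :
    ((PowerSeries.X : PowerSeries K) : LaurentSeries K) ^ m = single m 1 := by
  rw [PowerSeries.coe_X, ← RatFunc.single_zpow]

theorem nsmul_ne_neg_natCast {n i : ℕ} (h : ¬ n ∣ i) (m : ℤ) : n • m ≠ -(i : ℤ) := fun hm ↦
  h (Int.natCast_dvd_natCast.1 (dvd_neg.1 ⟨m, by rw [← hm, nsmul_eq_mul]⟩))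

theorem stmt6 (p : ℕ) [Fact p.Prime] (i k : ℕ) (hi : 0 < i) (hk : 0 < k)
    (hpi : ¬ p ∣ i) (hpk : ¬ p ∣ k)
    (b ε : LaurentSeries (ZMod p))
    (hε : ∃ e : PowerSeries (ZMod p),
      ε = (e : LaurentSeries (ZMod p)) ∧ PowerSeries.constantCoeff e = 0)
    (heq : ((PowerSeries.X : PowerSeries (ZMod p)) : LaurentSeries (ZMod p)) ^ (-(i : ℤ)) -
        ((PowerSeries.X : PowerSeries (ZMod p)) : LaurentSeries (ZMod p)) ^ (-(k : ℤ)) =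
      b ^ p - b + ε) :
    i = k := by
  obtain ⟨e, rfl, -⟩ := hε
  rw [coe_powerSeries_X_zpow, coe_powerSeries_X_zpow] at heq
  exact Nat.cast_injective (neg_injective (stmt6_general (Fact.out : p.Prime).one_lt (by lia)
    (nsmul_ne_neg_natCast hpi) (nsmul_ne_neg_natCast hpk) (orderTop_coe_powerSeries_nonneg e) heq))
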